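/- Let N ≥ 2 be a natural number, R > 0, and let z, ζ ∈ ℂ² satisfy ‖z‖ ≤ R, ‖ζ‖ ≤ R, and ‖z−φ_k(ζ)‖_∞ ≥ ‖z−ζ‖_∞ for every k = 1, …, N. Then ‖π_N(z)−π_N(ζ)‖ ≥ (‖z−ζ‖^N / (√8)^N) · min{ 1/(3R^{N−2}) , 1 }. -/

import Mathlib

open Complex

noncomputable section

/-- The point `(a, b)` of `ℂ²` with the Euclidean (Hermitian) norm. -/
def mk2 (a b : ℂ) : EuclideanSpace ℂ (Fin 2) :=
  (WithLp.equiv 2 (Fin 2 → ℂ)).symm ![a, b]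

/-- The point `(a, b, c)` of `ℂ³` with the Euclidean (Hermitian) norm. -/
def mk3 (a b c : ℂ) : EuclideanSpace ℂ (Fin 3) :=
  (WithLp.equiv 2 (Fin 3 → ℂ)).symm ![a, b, c]

/-- `π_N(z₁, z₂) = (z₁^N, z₂^N, z₁z₂)`. -/
def piN (N : ℕ) (z : EuclideanSpace ℂ (Fin 2)) : EuclideanSpace ℂ (Fin 3) :=
  mk3 (z 0 ^ N) (z 1 ^ N) (z 0 * z 1)

/-- `ρ_N = e^{2πi/N}`. -/
def rhoN (N : ℕ) : ℂ := Complex.exp (2 * Real.pi * Complex.I / N)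

/-- `φ_k(z₁, z₂) = (ρ_N^k z₁, ρ_N^{−k} z₂)`. -/
def phiN (N k : ℕ) (z : EuclideanSpace ℂ (Fin 2)) : EuclideanSpace ℂ (Fin 2) :=
  mk2 (rhoN N ^ k * z 0) (rhoN N ^ (-(k : ℤ)) * z 1)

/-- `‖z − ζ‖_∞ = max(|z₁−ζ₁|, |z₂−ζ₂|)`. -/
def supDist (z ζ : EuclideanSpace ℂ (Fin 2)) : ℝ :=
  max ‖z 0 - ζ 0‖ ‖z 1 - ζ 1‖

/-!
Let `r` be half the sup-distance from `z` to the orbit of `ζ`, so that for every `N`-th root of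
unity `w` one of `‖z₁ - wζ₁‖`, `‖z₂ - w⁻¹ζ₂‖` is at least `2r`. If every `‖z₁ - wζ₁‖` is at
least `r`, then `z₁ ^ N - ζ₁ ^ N = ∏ (z₁ - wζ₁)` has norm at least `r ^ N`; likewise for the
second coordinate. Otherwise some rotation brings the first coordinates within `r`, which forces
the second ones `2r` apart, and another does the opposite; together these two facts bound
`‖z₁z₂ - ζ₁ζ₂‖` below by `r ^ 2`.
-/

section NormedField

variable {K : Type*} [NormedField K] {N : ℕ} {ρ a b c d u v : K} {r s : ℝ}

theorem pow_le_norm_pow_sub_pow (hρ : IsPrimitiveRoot ρ N) (hN : 0 < N) (hr : 0 ≤ r)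
    (h : ∀ w : K, w ^ N = 1 → r ≤ ‖a - w * c‖) : r ^ N ≤ ‖a ^ N - c ^ N‖ := by
  rw [hρ.pow_sub_pow_eq_prod_sub_mul a c hN, norm_prod]
  calc r ^ N = ∏ _w ∈ Polynomial.nthRootsFinset N (1 : K), r := by
        rw [Finset.prod_const, hρ.card_nthRootsFinset]
    _ ≤ ∏ w ∈ Polynomial.nthRootsFinset N (1 : K), ‖a - w * c‖ :=
        Finset.prod_le_prod (fun _ _ ↦ hr)
          fun w hw ↦ h w ((Polynomial.mem_nthRootsFinset hN 1).1 hw)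

theorem le_norm_add_norm_of_le_norm_sub_mul (hu : ‖u‖ = 1) (h : s ≤ ‖a - u * c‖) :
    s ≤ ‖a‖ + ‖c‖ := by
  simpa only [norm_mul, hu, one_mul] using h.trans (norm_sub_le a (u * c))

theorem mul_norm_add_norm_le (hu : ‖u‖ = 1) (hr : ‖a - u * c‖ ≤ r) (hs : s ≤ ‖b - u⁻¹ * d‖) :
    s * (‖a‖ + ‖c‖) ≤ 2 * ‖a * b - c * d‖ + r * (‖b‖ + ‖d‖) := by
  have hu₀ : u ≠ 0 := norm_ne_zero_iff.1 (hu ▸ one_ne_zero)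
  have ha : s * ‖a‖ ≤ ‖a * b - c * d‖ + r * ‖d‖ :=
    calc s * ‖a‖ ≤ ‖b - u⁻¹ * d‖ * ‖a‖ := by gcongr
      _ = ‖(a * b - c * d) - (a - u * c) * (u⁻¹ * d)‖ := by
          rw [← norm_mul]; congr 1; field_simp; ring
      _ ≤ ‖a * b - c * d‖ + ‖a - u * c‖ * ‖d‖ := by
          simpa only [norm_mul, norm_inv, hu, inv_one, one_mul] using
            norm_sub_le (a * b - c * d) ((a - u * c) * (u⁻¹ * d))
      _ ≤ ‖a * b - c * d‖ + r * ‖d‖ := by gcongr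
  have hc : s * ‖c‖ ≤ ‖a * b - c * d‖ + r * ‖b‖ :=
    calc s * ‖c‖ ≤ ‖b - u⁻¹ * d‖ * ‖u * c‖ := by rw [norm_mul, hu, one_mul]; gcongr
      _ = ‖(a * b - c * d) - (a - u * c) * b‖ := by
          rw [← norm_mul]; congr 1; field_simp; ring
      _ ≤ ‖a * b - c * d‖ + ‖a - u * c‖ * ‖b‖ := by
          simpa only [norm_mul] using norm_sub_le (a * b - c * d) ((a - u * c) * b)
      _ ≤ ‖a * b - c * d‖ + r * ‖b‖ := by gcongr
  linarith

theorem sq_le_norm_mul_sub_mul (hu : ‖u‖ = 1) (hv : ‖v‖ = 1)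
    (hac : ‖a - u * c‖ ≤ r) (hbd' : 2 * r ≤ ‖b - u⁻¹ * d‖)
    (hbd : ‖b - v * d‖ ≤ r) (hac' : 2 * r ≤ ‖a - v⁻¹ * c‖) :
    r ^ 2 ≤ ‖a * b - c * d‖ := by
  have hr : 0 ≤ r := (norm_nonneg _).trans hac
  have hsum₁ : 2 * r ≤ ‖a‖ + ‖c‖ :=
    le_norm_add_norm_of_le_norm_sub_mul (by rw [norm_inv, hv, inv_one]) hac'
  have hsum₂ : 2 * r ≤ ‖b‖ + ‖d‖ :=
    le_norm_add_norm_of_le_norm_sub_mul (by rw [norm_inv, hu, inv_one]) hbd'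
  have hmul₁ : 2 * r * (‖a‖ + ‖c‖) ≤ 2 * ‖a * b - c * d‖ + r * (‖b‖ + ‖d‖) :=
    mul_norm_add_norm_le hu hac hbd'
  have hmul₂ : 2 * r * (‖b‖ + ‖d‖) ≤ 2 * ‖a * b - c * d‖ + r * (‖a‖ + ‖c‖) := by
    simpa only [mul_comm b a, mul_comm d c] using mul_norm_add_norm_le hv hbd hac'
  have hprod : r * (4 * r) ≤ r * ((‖a‖ + ‖c‖) + (‖b‖ + ‖d‖)) := by gcongr; linarith
  linarith

theorem pow_le_norm_pow_sub_pow_or_sq_le_norm_mul_sub_mul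
    (hρ : IsPrimitiveRoot ρ N) (hN : 0 < N) (hr : 0 ≤ r)
    (h : ∀ w : K, w ^ N = 1 → 2 * r ≤ max ‖a - w * c‖ ‖b - w⁻¹ * d‖) :
    r ^ N ≤ ‖a ^ N - c ^ N‖ ∨ r ^ N ≤ ‖b ^ N - d ^ N‖ ∨ r ^ 2 ≤ ‖a * b - c * d‖ := by
  by_cases hac : ∀ w : K, w ^ N = 1 → r ≤ ‖a - w * c‖
  · exact .inl (pow_le_norm_pow_sub_pow hρ hN hr hac)
  by_cases hbd : ∀ w : K, w ^ N = 1 → r ≤ ‖b - w * d‖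
  · exact .inr (.inl (pow_le_norm_pow_sub_pow hρ hN hr hbd))
  push Not at hac hbd
  obtain ⟨u, hu, hac⟩ := hac
  obtain ⟨v, hv, hbd⟩ := hbd
  have hbd' : 2 * r ≤ ‖b - u⁻¹ * d‖ := (le_max_iff.1 (h u hu)).resolve_left (by linarith)
  have hac' : 2 * r ≤ ‖a - v⁻¹ * c‖ :=
    (le_max_iff.1 (h v⁻¹ (by rw [inv_pow, hv, inv_one]))).resolve_right
      (by rw [inv_inv]; linarith)
  have hnorm {w : K} (hw : w ^ N = 1) : ‖w‖ = 1 :=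
    (isOfFinOrder_iff_pow_eq_one.2 ⟨N, hN, hw⟩).norm_eq_one
  exact .inr (.inr (sq_le_norm_mul_sub_mul (hnorm hu) (hnorm hv) hac.le hbd' hbd.le hac'))

end NormedField

theorem exists_pow_eq_of_pow_eq_one {M : Type*} [CommRing M] [IsDomain M] {N : ℕ} {ρ w : M}
    (hρ : IsPrimitiveRoot ρ N) (hN : 0 < N) (hw : w ^ N = 1) :
    ∃ k, 1 ≤ k ∧ k ≤ N ∧ ρ ^ k = w := by
  have : NeZero N := ⟨hN.ne'⟩
  have hwρ : (w * ρ ^ (N - 1)) ^ N = 1 := by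
    rw [mul_pow, hw, pow_right_comm, hρ.pow_eq_one, one_pow, one_mul]
  obtain ⟨i, hi, hiw⟩ := hρ.eq_pow_of_pow_eq_one hwρ
  refine ⟨i + 1, by omega, hi, ?_⟩
  rw [pow_succ, hiw, mul_assoc, pow_sub_one_mul hN.ne', hρ.pow_eq_one, mul_one]

theorem pow_mul_min_le_min_pow_sq {N : ℕ} {s t R : ℝ} (hN : 2 ≤ N) (hR : 0 < R) (hs : 0 ≤ s)
    (hst : s ≤ t) (htR : t ≤ R) :
    s ^ N * min (1 / (3 * R ^ (N - 2))) 1 ≤ min (t ^ N) (t ^ 2) := by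
  have ht : 0 ≤ t := hs.trans hst
  refine le_min ?_ ?_
  · calc s ^ N * min (1 / (3 * R ^ (N - 2))) 1 ≤ t ^ N * 1 := by
          gcongr; exact min_le_right _ _
      _ = t ^ N := mul_one _
  · calc s ^ N * min (1 / (3 * R ^ (N - 2))) 1 ≤ t ^ N * (1 / (3 * R ^ (N - 2))) := by
          gcongr; exact min_le_left _ _
      _ = t ^ 2 * t ^ (N - 2) * (1 / (3 * R ^ (N - 2))) := by rw [← pow_add, Nat.add_sub_of_le hN]
      _ ≤ t ^ 2 * R ^ (N - 2) * (1 / (3 * R ^ (N - 2))) := by gcongr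
      _ = t ^ 2 / 3 := by field_simp
      _ ≤ t ^ 2 := div_le_self (sq_nonneg t) (by norm_num)

section SupDist

variable (z ζ : EuclideanSpace ℂ (Fin 2))

theorem supDist_nonneg : 0 ≤ supDist z ζ :=
  le_max_of_le_left (norm_nonneg _)

theorem supDist_le_norm_sub : supDist z ζ ≤ ‖z - ζ‖ :=
  max_le (PiLp.norm_apply_le (z - ζ) 0) (PiLp.norm_apply_le (z - ζ) 1)

theorem norm_sub_le_sqrt_two_mul_supDist : ‖z - ζ‖ ≤ √2 * supDist z ζ := by
  have h₀ : ‖z 0 - ζ 0‖ ≤ supDist z ζ := le_max_left _ _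
  have h₁ : ‖z 1 - ζ 1‖ ≤ supDist z ζ := le_max_right _ _
  refine le_of_sq_le_sq ?_ (mul_nonneg (Real.sqrt_nonneg 2) (supDist_nonneg z ζ))
  calc ‖z - ζ‖ ^ 2 = ‖z 0 - ζ 0‖ ^ 2 + ‖z 1 - ζ 1‖ ^ 2 := by
        rw [EuclideanSpace.norm_sq_eq, Fin.sum_univ_two, PiLp.sub_apply, PiLp.sub_apply]
    _ ≤ supDist z ζ ^ 2 + supDist z ζ ^ 2 := by gcongr
    _ = (√2 * supDist z ζ) ^ 2 := by rw [mul_pow, Real.sq_sqrt zero_le_two, two_mul]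

theorem norm_sub_div_sqrt_eight_le : ‖z - ζ‖ / √8 ≤ supDist z ζ / 2 := by
  have h8 : √8 = 2 * √2 := by
    rw [show (8 : ℝ) = 2 ^ 2 * 2 by norm_num, Real.sqrt_mul (by norm_num),
      Real.sqrt_sq zero_le_two]
  rw [h8, div_le_div_iff₀ (by positivity) two_pos]
  linarith [norm_sub_le_sqrt_two_mul_supDist z ζ]

variable {z ζ}

theorem supDist_div_two_le {R : ℝ} (hz : ‖z‖ ≤ R) (hζ : ‖ζ‖ ≤ R) : supDist z ζ / 2 ≤ R := by
  linarith [supDist_le_norm_sub z ζ, norm_sub_le z ζ]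

end SupDist

theorem supDist_phiN (N k : ℕ) (z ζ : EuclideanSpace ℂ (Fin 2)) :
    supDist z (phiN N k ζ) =
      max ‖z 0 - rhoN N ^ k * ζ 0‖ ‖z 1 - (rhoN N ^ k)⁻¹ * ζ 1‖ := by
  simp [supDist, phiN, mk2]

theorem isPrimitiveRoot_rhoN {N : ℕ} (hN : 0 < N) : IsPrimitiveRoot (rhoN N) N :=
  Complex.isPrimitiveRoot_exp N hN.ne'

theorem stmt8_general {N : ℕ} (hN : 0 < N) {D : ℝ} (hD : 0 ≤ D)
    {z ζ : EuclideanSpace ℂ (Fin 2)}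
    (h : ∀ k : ℕ, 1 ≤ k → k ≤ N → D ≤ supDist z (phiN N k ζ)) :
    min ((D / 2) ^ N) ((D / 2) ^ 2) ≤ ‖piN N z - piN N ζ‖ := by
  have hρ := isPrimitiveRoot_rhoN hN
  have horbit (w : ℂ) (hw : w ^ N = 1) :
      2 * (D / 2) ≤ max ‖z 0 - w * ζ 0‖ ‖z 1 - w⁻¹ * ζ 1‖ := by
    obtain ⟨k, hk, hkN, rfl⟩ := exists_pow_eq_of_pow_eq_one hρ hN hw
    rw [mul_div_cancel₀ D two_ne_zero, ← supDist_phiN]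
    exact h k hk hkN
  have hcoord := PiLp.norm_apply_le (piN N z - piN N ζ)
  rcases pow_le_norm_pow_sub_pow_or_sq_le_norm_mul_sub_mul hρ hN (by positivity) horbit with
    h₀ | h₁ | h₂
  · exact (min_le_left _ _).trans (h₀.trans (hcoord 0))
  · exact (min_le_left _ _).trans (h₁.trans (hcoord 1))
  · exact (min_le_right _ _).trans (h₂.trans (hcoord 2))

/-- If `‖z‖ ≤ R`, `‖ζ‖ ≤ R` and `‖z−φ_k(ζ)‖_∞ ≥ ‖z−ζ‖_∞` for every `k = 1, …, N`, then
`‖π_N(z)−π_N(ζ)‖ ≥ (‖z−ζ‖^N/(√8)^N)·min{1/(3R^{N−2}), 1}`. -/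
theorem stmt8 (N : ℕ) (hN : 2 ≤ N) (R : ℝ) (hR : 0 < R)
    (z ζ : EuclideanSpace ℂ (Fin 2)) (hz : ‖z‖ ≤ R) (hζ : ‖ζ‖ ≤ R)
    (h : ∀ k : ℕ, 1 ≤ k → k ≤ N → supDist z (phiN N k ζ) ≥ supDist z ζ) :
    ‖piN N z - piN N ζ‖ ≥
      ‖z - ζ‖ ^ N / Real.sqrt 8 ^ N * min (1 / (3 * R ^ (N - 2))) 1 := by
  rw [ge_iff_le, ← div_pow]
  exact (pow_mul_min_le_min_pow_sq hN hR (by positivity) (norm_sub_div_sqrt_eight_le z ζ)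
    (supDist_div_two_le hz hζ)).trans (stmt8_general (by omega) (supDist_nonneg z ζ) h)
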